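/- If a collection of m paths in a graph is such that any two of them intersect in at most one common contiguous subpath (because they are unique shortest paths between their endpoints), then the union of the paths has at most O(m²) vertices of degree greater than 2, and in particular at most 2m² + 2m such vertices. -/

import Mathlib

/-!
At a vertex whose degree in the union exceeds `2`, some two of the paths through it must have
different neighbour sets there. Each of these sets has at most two elements, so their intersection
has fewer than two: the vertex is an end of the common subpath of the two paths. Each of the
`m.choose 2` pairs of paths thus accounts for at most two vertices of high degree.
-/

section Sets

variable {ι α : Type*}

theorem encard_pair_le (x y : α) : ({x, y} : Set α).encard ≤ 2 := by
  simpa [one_add_one_eq_two] using Set.encard_insert_le {y} x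

theorem exists_ne_encard_inter_lt_of_lt_encard_iUnion {A : ι → Set α} {d : ℕ}
    (hA : ∀ i, (A i).encard ≤ d) (hd : d < (⋃ i, A i).encard) :
    ∃ i j, i ≠ j ∧ (A i).Nonempty ∧ (A j).Nonempty ∧ (A i ∩ A j).encard < d := by
  have union_nonempty : (⋃ i, A i).Nonempty := Set.encard_pos.1 (pos_of_gt hd)
  obtain ⟨i, hi⟩ := Set.nonempty_iUnion.1 union_nonempty
  by_contra! h
  have subset (j : ι) : A j ⊆ A i := by
    rcases eq_or_ne i j with rfl | hij
    · rfl
    rcases (A j).eq_empty_or_nonempty with hj | hj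
    · exact hj ▸ Set.empty_subset _
    have inter_eq : A i ∩ A j = A j :=
      (Set.finite_of_encard_le_coe (hA j)).eq_of_subset_of_encard_le' Set.inter_subset_right
        ((hA j).trans (h i j hij hi hj))
    exact Set.inter_eq_right.1 inter_eq
  exact hd.not_ge ((Set.encard_le_encard (Set.iUnion_subset subset)).trans (hA i))

end Sets

section Subgraphs

variable {V ι : Type*} {G : SimpleGraph V}

/-- The vertices of the subgraph `K` whose degree in `K` is less than `d`; for a path and `d = 2`
these are its ends. Membership in `K.verts` is required because `K.neighborSet` is empty off
`K.verts`. -/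
def vertsDegreeLT (K : G.Subgraph) (d : ℕ∞) : Set V :=
  {v ∈ K.verts | (K.neighborSet v).encard < d}

theorem exists_ne_mem_vertsDegreeLT_inf {H : ι → G.Subgraph} {d : ℕ} {v : V}
    (hdeg : ∀ i, ((H i).neighborSet v).encard ≤ d)
    (hv : d < ((⨆ i, H i).neighborSet v).encard) :
    ∃ i j, i ≠ j ∧ v ∈ vertsDegreeLT (H i ⊓ H j) d := by
  rw [SimpleGraph.Subgraph.neighborSet_iSup] at hv
  obtain ⟨i, j, hij, ⟨_, hi⟩, ⟨_, hj⟩, hlt⟩ :=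
    exists_ne_encard_inter_lt_of_lt_encard_iUnion hdeg hv
  refine ⟨i, j, hij, ⟨hi.fst_mem, hj.fst_mem⟩, ?_⟩
  rwa [SimpleGraph.Subgraph.neighborSet_inf]

theorem encard_setOf_lt_encard_neighborSet_iSup_le [Fintype ι] {H : ι → G.Subgraph} {d : ℕ}
    {k : ℕ∞} (hdeg : ∀ i v, ((H i).neighborSet v).encard ≤ d)
    (hinter : ∀ i j, i ≠ j → (vertsDegreeLT (H i ⊓ H j) d).encard ≤ k) :
    {v : V | d < ((⨆ i, H i).neighborSet v).encard}.encard ≤ (Fintype.card ι).choose 2 * k := by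
  classical
  let pairs : Finset (Finset ι) := Finset.univ.powersetCard 2
  have covered : {v : V | d < ((⨆ i, H i).neighborSet v).encard} ⊆
      ⋃ s ∈ pairs, vertsDegreeLT (s.inf H) d := by
    intro v hv
    obtain ⟨i, j, hij, hmem⟩ := exists_ne_mem_vertsDegreeLT_inf (hdeg · v) hv
    refine Set.mem_biUnion (x := {i, j}) ?_ (by simpa using hmem)
    exact Finset.mem_powersetCard_univ.2 (Finset.card_pair hij)
  have bound (s) (hs : s ∈ pairs) : (vertsDegreeLT (s.inf H) d).encard ≤ k := by
    obtain ⟨i, j, hij, rfl⟩ := Finset.card_eq_two.1 (Finset.mem_powersetCard_univ.1 hs)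
    simpa using hinter i j hij
  calc {v : V | d < ((⨆ i, H i).neighborSet v).encard}.encard
      ≤ (⋃ s ∈ pairs, vertsDegreeLT (s.inf H) d).encard := Set.encard_le_encard covered
    _ ≤ ∑ s ∈ pairs, (vertsDegreeLT (s.inf H) d).encard := pairs.set_encard_biUnion_le _
    _ ≤ pairs.card • k := Finset.sum_le_card_nsmul _ _ _ bound
    _ = (Fintype.card ι).choose 2 * k := by simp [pairs]

section Paths

variable {a b : V} {w : G.Walk a b}

theorem neighborSet_toSubgraph_getVert_subset (hw : w.IsPath) {n : ℕ} (hn : n ≤ w.length) :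
    w.toSubgraph.neighborSet (w.getVert n) ⊆ {w.getVert (n - 1), w.getVert (n + 1)} := by
  intro u hu
  obtain ⟨i, hi, hlt⟩ := w.toSubgraph_adj_iff.1 hu
  rcases Sym2.eq_iff.1 hi with ⟨hin, rfl⟩ | ⟨rfl, hin⟩
  · obtain rfl : i = n := hw.getVert_injOn hlt.le hn hin
    exact Or.inr rfl
  · obtain rfl : i + 1 = n := hw.getVert_injOn (Nat.succ_le_of_lt hlt) hn hin
    exact Or.inl rfl

theorem encard_neighborSet_toSubgraph_le_two (hw : w.IsPath) (v : V) :
    (w.toSubgraph.neighborSet v).encard ≤ 2 := by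
  rcases (w.toSubgraph.neighborSet v).eq_empty_or_nonempty with h | ⟨u, hu⟩
  · simp [h]
  obtain ⟨n, rfl, hn⟩ := SimpleGraph.Walk.mem_support_iff_exists_getVert.1
    (w.mem_verts_toSubgraph.1 hu.fst_mem)
  exact (Set.encard_le_encard (neighborSet_toSubgraph_getVert_subset hw hn)).trans
    (encard_pair_le _ _)

theorem vertsDegreeLT_toSubgraph_two_subset (hw : w.IsPath) :
    vertsDegreeLT w.toSubgraph 2 ⊆ {a, b} := by
  rintro v ⟨hv, hlt⟩
  obtain ⟨n, rfl, hn⟩ := SimpleGraph.Walk.mem_support_iff_exists_getVert.1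
    (w.mem_verts_toSubgraph.1 hv)
  by_contra hends
  have pos : n ≠ 0 := by rintro rfl; simp at hends
  have lt_length : n < w.length := hn.lt_of_ne (by rintro rfl; simp at hends)
  have ncard_eq := hw.ncard_neighborSet_toSubgraph_internal_eq_two pos lt_length
  rw [← w.finite_neighborSet_toSubgraph.cast_ncard_eq, ncard_eq] at hlt
  exact hlt.false

end Paths

theorem union_of_paths_high_degree_general [Fintype ι] (H : ι → G.Subgraph)
    (hdeg : ∀ i v, ((H i).neighborSet v).encard ≤ 2)
    (hinter : ∀ i j, i ≠ j →
      H i ⊓ H j = ⊥ ∨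
      ∃ (a b : V) (w : G.Walk a b), w.IsPath ∧ H i ⊓ H j = w.toSubgraph) :
    {v : V | 2 < ((⨆ i, H i).neighborSet v).encard}.encard ≤ (Fintype.card ι).choose 2 * 2 := by
  refine encard_setOf_lt_encard_neighborSet_iSup_le (d := 2) hdeg fun i j hij ↦ ?_
  obtain h | ⟨a, b, w, hw, h⟩ := hinter i j hij
  · simp [h, vertsDegreeLT]
  · rw [h]
    exact (Set.encard_le_encard (vertsDegreeLT_toSubgraph_two_subset hw)).trans
      (encard_pair_le a b)

end Subgraphs

/-- If a collection of `m` paths in a graph is such that any two of them intersect in at most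
one common contiguous subpath, then the union of the paths has at most `2m² + 2m` vertices of
degree greater than `2` (degree measured in the union subgraph). -/
theorem union_of_paths_high_degree {V : Type*} {G : SimpleGraph V} (m : ℕ)
    (H : Fin m → G.Subgraph)
    (hpath : ∀ i, ∃ (a b : V) (w : G.Walk a b), w.IsPath ∧ H i = w.toSubgraph)
    (hinter : ∀ i j, i ≠ j →
      H i ⊓ H j = ⊥ ∨
      ∃ (a b : V) (w : G.Walk a b), w.IsPath ∧ H i ⊓ H j = w.toSubgraph) :
    {v : V | 2 < ((⨆ i, H i).neighborSet v).ncard}.ncard ≤ 2 * m ^ 2 + 2 * m := by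
  have hdeg (i v) : ((H i).neighborSet v).encard ≤ 2 := by
    obtain ⟨a, b, w, hw, h⟩ := hpath i
    exact h ▸ encard_neighborSet_toSubgraph_le_two hw v
  have ncard_subset : {v : V | 2 < ((⨆ i, H i).neighborSet v).ncard} ⊆
      {v | 2 < ((⨆ i, H i).neighborSet v).encard} := fun v hv ↦
    (Nat.cast_lt.2 hv).trans_le (Set.ncard_le_encard _)
  have encard_le : {v : V | 2 < ((⨆ i, H i).neighborSet v).ncard}.encard ≤
      (m.choose 2 * 2 : ℕ) := by
    simpa only [Fintype.card_fin, Nat.cast_mul, Nat.cast_ofNat] using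
      (Set.encard_le_encard ncard_subset).trans (union_of_paths_high_degree_general H hdeg hinter)
  calc {v : V | 2 < ((⨆ i, H i).neighborSet v).ncard}.ncard
      ≤ m.choose 2 * 2 := ENat.toNat_le_of_le_natCast encard_le
    _ ≤ m ^ 2 * 2 := by gcongr; exact Nat.choose_le_pow m 2
    _ ≤ 2 * m ^ 2 + 2 * m := by lia
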